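/- Consider one Consensus ALADIN iteration with constant matrices for the consensus problem, where each f_i is differentiable and m-strongly convex with m > 0, (z*, λ*) is a KKT point, and the input dual variables satisfy Σ_i λ_i = 0. If δ > 0 satisfies δ · L(z⁺, λ⁺) ≤ 4m Σ_{i=1}^N ‖x_i⁺ − z*‖², then L(z⁺, λ⁺) ≤ (1/(1+δ)) · L(z, λ). -/

import Mathlib

open Matrix Finset

/-! Peaceman–Rachford splitting in the metrics `Bᵢ`. With `uᵢ = xᵢ⁺ - z*` and `γᵢ = gᵢ + λᵢ*`, an
iteration reflects `Bᵢ uᵢ + γᵢ = Bᵢ (z - z*) - (λᵢ - λᵢ*)` to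
`Bᵢ uᵢ - γᵢ = Bᵢ (z⁺ - z*) + (λᵢ⁺ - λᵢ*)`. As the multipliers sum to zero, the two energies are the
sums of the squared `Bᵢ⁻¹`-norms of these vectors, whence `L(z, λ) - L(z⁺, λ⁺) = 4 ∑ᵢ ⟨γᵢ, uᵢ⟩`.
Optimality of `xᵢ⁺` makes `gᵢ` a subgradient of `fᵢ` there, so `⟨γᵢ, uᵢ⟩ ≥ m ‖uᵢ‖²` by strong
monotonicity of the subdifferential. -/

section ConvexAnalysis

variable {E : Type*} [AddCommGroup E] [Module ℝ E] {s : Set E} {φ q : E → ℝ}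

theorem convexOn_of_forall_exists_linear_support (hs : Convex ℝ s)
    (hφ : ∀ x ∈ s, ∃ ℓ : E →ₗ[ℝ] ℝ, ∀ y ∈ s, φ x + ℓ (y - x) ≤ φ y) : ConvexOn ℝ s φ := by
  refine ⟨hs, fun x hx y hy a b ha hb hab => ?_⟩
  obtain ⟨ℓ, hℓ⟩ := hφ _ (hs hx hy ha hb hab)
  set w := a • x + b • y with hw
  have hcancel : a * ℓ (x - w) + b * ℓ (y - w) = 0 := by
    have hzero : a • (x - w) + b • (y - w) = (1 - (a + b)) • w := by rw [hw]; module
    rw [← smul_eq_mul, ← smul_eq_mul, ← map_smul, ← map_smul, ← map_add, hzero, hab, sub_self,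
      zero_smul, map_zero]
  calc φ w = a * (φ w + ℓ (x - w)) + b * (φ w + ℓ (y - w)) := by
        linear_combination -φ w * hab - hcancel
    _ ≤ a • φ x + b • φ y :=
        add_le_add (mul_le_mul_of_nonneg_left (hℓ x hx) ha)
          (mul_le_mul_of_nonneg_left (hℓ y hy) hb)

theorem le_add_lineDeriv_of_isMinOn_convexOn_add (hφ : ConvexOn ℝ s φ) {x y : E} {dq : ℝ}
    (hmin : IsMinOn (φ + q) s x) (hx : x ∈ s) (hy : y ∈ s)
    (hq : HasLineDerivWithinAt ℝ q dq s x (y - x)) : φ x ≤ φ y + dq := by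
  -- The chord of `φ` from `x` to `y` lies above `φ`, so replacing `φ` by it keeps
  -- the minimum at `x`.
  let h : ℝ → ℝ := fun t => t * (φ y - φ x) + q (x + t • (y - x))
  have hmem : ∀ t ∈ Set.Icc (0 : ℝ) 1, x + t • (y - x) ∈ s := fun t ht =>
    hφ.1.add_smul_sub_mem hx hy ht
  have hh : HasDerivWithinAt h (φ y - φ x + dq) (Set.Icc 0 1) 0 := by
    have hchord := (hasDerivWithinAt_id (0 : ℝ) (Set.Icc 0 1)).mul_const (φ y - φ x)
    rw [one_mul] at hchord
    exact hchord.add (HasDerivWithinAt.mono hq hmem)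
  have hhmin : IsMinOn h (Set.Icc 0 1) 0 := by
    intro t ht
    have hchord : φ (x + t • (y - x)) ≤ φ x + t * (φ y - φ x) := by
      have hconv := hφ.2 hx hy (sub_nonneg.2 ht.2) ht.1 (sub_add_cancel 1 t)
      rw [show (1 - t) • x + t • y = x + t • (y - x) by module, smul_eq_mul, smul_eq_mul] at hconv
      linarith
    have hle : φ x + q x ≤ φ (x + t • (y - x)) + q (x + t • (y - x)) := hmin (hmem t ht)
    simp only [Set.mem_ofPred_eq, h, zero_mul, zero_smul, add_zero, zero_add]
    linarith
  have htangent : (1 : ℝ) ∈ posTangentConeAt (Set.Icc (0 : ℝ) 1) 0 :=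
    mem_posTangentConeAt_of_segment_subset (by rw [zero_add, segment_eq_Icc zero_le_one])
  have hnonneg := hhmin.localize.hasFDerivWithinAt_nonneg hh.hasFDerivWithinAt htangent
  simp only [ContinuousLinearMap.toSpanSingleton_apply, one_smul] at hnonneg
  linarith

end ConvexAnalysis

section QuadForm

variable {R n : Type*} [CommRing R] [Fintype n]

/-- The quadratic form `vᵀ M v`, written `‖v‖²_M` when `M` is positive definite. -/
def quadForm (M : Matrix n n R) (v : n → R) : R :=
  v ⬝ᵥ (M *ᵥ v)

theorem quadForm_neg (M : Matrix n n R) (v : n → R) : quadForm M (-v) = quadForm M v := by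
  rw [quadForm, mulVec_neg, neg_dotProduct_neg, quadForm]

theorem quadForm_smul (M : Matrix n n R) (t : R) (v : n → R) :
    quadForm M (t • v) = t ^ 2 * quadForm M v := by
  simp only [quadForm, mulVec_smul, smul_dotProduct, dotProduct_smul, smul_eq_mul]
  ring

theorem quadForm_add {M : Matrix n n R} (hM : M.IsSymm) (u v : n → R) :
    quadForm M (u + v) = quadForm M u + 2 * ((M *ᵥ u) ⬝ᵥ v) + quadForm M v := by
  have hadj : u ⬝ᵥ (M *ᵥ v) = (M *ᵥ u) ⬝ᵥ v := by
    rw [dotProduct_mulVec, ← mulVec_transpose, hM.eq]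
  simp only [quadForm, mulVec_add, add_dotProduct, dotProduct_add, hadj,
    dotProduct_comm v (M *ᵥ u)]
  ring

theorem quadForm_inv_mulVec_add [DecidableEq n] {M : Matrix n n R} (hM : M.IsSymm)
    (hM' : IsUnit M) (u c : n → R) :
    quadForm M⁻¹ (M *ᵥ u + c) = quadForm M u + 2 * (c ⬝ᵥ u) + quadForm M⁻¹ c := by
  have hinv : M⁻¹ *ᵥ (M *ᵥ u) = u := by
    rw [mulVec_mulVec, nonsing_inv_mul _ ((isUnit_iff_isUnit_det M).1 hM'), one_mulVec]
  rw [quadForm_add hM.inv, hinv, dotProduct_comm u c]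
  simp only [quadForm, hinv, dotProduct_comm (M *ᵥ u) u]

theorem quadForm_inv_mulVec_add_sub_quadForm_inv_mulVec_sub [DecidableEq n] {M : Matrix n n R}
    (hM : M.IsSymm) (hM' : IsUnit M) (u c : n → R) :
    quadForm M⁻¹ (M *ᵥ u + c) - quadForm M⁻¹ (M *ᵥ u - c) = 4 * (c ⬝ᵥ u) := by
  rw [sub_eq_add_neg (M *ᵥ u), quadForm_inv_mulVec_add hM hM', quadForm_inv_mulVec_add hM hM',
    quadForm_neg, neg_dotProduct]
  ring

theorem sum_quadForm_inv_mulVec_add [DecidableEq n] {ι : Type*} [Fintype ι]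
    {B : ι → Matrix n n R} (hB : ∀ i, (B i).IsSymm) (hB' : ∀ i, IsUnit (B i)) (w : n → R)
    {μ : ι → n → R} (hμ : ∑ i, μ i = 0) :
    ∑ i, quadForm (B i)⁻¹ (B i *ᵥ w + μ i) =
      ∑ i, (quadForm (B i)⁻¹ (μ i) + quadForm (B i) w) := by
  have hcross : ∑ i, 2 * (μ i ⬝ᵥ w) = 0 := by
    rw [← mul_sum, ← sum_dotProduct, hμ, zero_dotProduct, mul_zero]
  simp only [fun i => quadForm_inv_mulVec_add (hB i) (hB' i) w (μ i), sum_add_distrib, hcross]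
  ring

end QuadForm

section LineDeriv

variable {n : Type*} [Fintype n]

theorem hasLineDerivAt_dotProduct (c x v : n → ℝ) :
    HasLineDerivAt ℝ (fun y => c ⬝ᵥ y) (c ⬝ᵥ v) x v := by
  simp only [HasLineDerivAt, dotProduct_add, dotProduct_smul, smul_eq_mul]
  simpa using ((hasDerivAt_id (0 : ℝ)).mul_const (c ⬝ᵥ v)).const_add (c ⬝ᵥ x)

theorem hasLineDerivAt_quadForm_sub {B : Matrix n n ℝ} (hB : B.IsSymm) (z x v : n → ℝ) :
    HasLineDerivAt ℝ (fun y => quadForm B (y - z)) (2 * ((B *ᵥ (x - z)) ⬝ᵥ v)) x v := by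
  simp only [HasLineDerivAt, add_sub_right_comm, quadForm_add hB, quadForm_smul, dotProduct_smul,
    smul_eq_mul]
  have hlinear := ((hasDerivAt_id (0 : ℝ)).mul_const ((B *ᵥ (x - z)) ⬝ᵥ v)).const_mul 2
  have hsquare := (hasDerivAt_pow 2 (0 : ℝ)).mul_const (quadForm B v)
  exact ((hlinear.const_add (quadForm B (x - z))).add hsquare).congr_deriv (by simp)

end LineDeriv

section StrongSubgradient

variable {n : Type*} [Fintype n] {m : ℝ} {f q : (n → ℝ) → ℝ} {g h x y : n → ℝ}

/-- `g` is an `m`-strong subgradient of `f` at `x`: a paraboloid of curvature `m` and slope `g`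
touches the graph of `f` at `x` from below. For `m = 0` this is the usual notion of subgradient. -/
def IsStrongSubgradientAt (m : ℝ) (f : (n → ℝ) → ℝ) (g x : n → ℝ) : Prop :=
  ∀ y, f x + g ⬝ᵥ (y - x) + m / 2 * ((y - x) ⬝ᵥ (y - x)) ≤ f y

/-- Strong convexity in the form of `strongConvexOn_iff_convex`, for the Euclidean norm instead of
the supremum norm that `n → ℝ` carries in Mathlib. -/
def IsStronglyConvex (m : ℝ) (f : (n → ℝ) → ℝ) : Prop :=
  ConvexOn ℝ Set.univ fun x => f x - m / 2 * (x ⬝ᵥ x)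

theorem isStrongSubgradientAt_iff_sub :
    IsStrongSubgradientAt m f g x ↔
      ∀ y, f x - m / 2 * (x ⬝ᵥ x) + (g - m • x) ⬝ᵥ (y - x) ≤ f y - m / 2 * (y ⬝ᵥ y) := by
  refine forall_congr' fun y => ?_
  have hexpand : m / 2 * ((y - x) ⬝ᵥ (y - x)) =
      m / 2 * (y ⬝ᵥ y) - m / 2 * (x ⬝ᵥ x) - m * (x ⬝ᵥ (y - x)) := by
    simp only [sub_dotProduct, dotProduct_sub, dotProduct_comm y x]
    ring
  rw [hexpand, sub_dotProduct, smul_dotProduct, smul_eq_mul]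
  constructor <;> intro hy <;> linarith

theorem isStronglyConvex_of_forall_exists_isStrongSubgradientAt
    (hf : ∀ x, ∃ g, IsStrongSubgradientAt m f g x) : IsStronglyConvex m f := by
  refine convexOn_of_forall_exists_linear_support convex_univ fun x _ => ?_
  obtain ⟨g, hg⟩ := hf x
  exact ⟨dotProductBilin ℝ ℝ (g - m • x), fun y _ => isStrongSubgradientAt_iff_sub.1 hg y⟩

namespace IsStrongSubgradientAt

theorem mono {m' : ℝ} (hg : IsStrongSubgradientAt m f g x) (hm : m' ≤ m) :
    IsStrongSubgradientAt m' f g x := fun y => by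
  have hsq : 0 ≤ (y - x) ⬝ᵥ (y - x) := by simpa using dotProduct_star_self_nonneg (y - x)
  linarith [hg y, mul_le_mul_of_nonneg_right hm hsq]

theorem strongly_monotone (hg : IsStrongSubgradientAt m f g x)
    (hh : IsStrongSubgradientAt m f h y) :
    m * ((x - y) ⬝ᵥ (x - y)) ≤ (g - h) ⬝ᵥ (x - y) := by
  have hxy := hg y
  rw [← neg_sub x y, neg_dotProduct_neg, dotProduct_neg] at hxy
  rw [sub_dotProduct g h]
  linarith [hh x]

end IsStrongSubgradientAt

namespace IsStronglyConvex

theorem isStrongSubgradientAt_of_forall_add_le_add (hf : IsStronglyConvex m f)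
    (hmin : ∀ y, f x + q x ≤ f y + q y)
    (hq : ∀ v, HasLineDerivAt ℝ q (-(g ⬝ᵥ v)) x v) : IsStrongSubgradientAt m f g x := by
  classical
  refine isStrongSubgradientAt_iff_sub.2 fun y => ?_
  -- Move the curvature `m / 2 * ‖·‖²` from `f` into the differentiable summand.
  let p : (n → ℝ) → ℝ := fun y => m / 2 * quadForm 1 (y - 0) + q y
  have hp : HasLineDerivAt ℝ p (m * (x ⬝ᵥ (y - x)) - g ⬝ᵥ (y - x)) x (y - x) := by
    have hsquare := (hasLineDerivAt_quadForm_sub isSymm_one 0 x (y - x)).const_mul (m / 2)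
    refine (hsquare.add (hq (y - x))).congr_deriv ?_
    rw [sub_zero, one_mulVec]
    ring
  have hpmin : IsMinOn ((fun x => f x - m / 2 * (x ⬝ᵥ x)) + p) Set.univ x := fun y _ => by
    simp only [Set.mem_ofPred_eq, Pi.add_apply, p, quadForm, sub_zero, one_mulVec]
    linarith [hmin y]
  have hsupport := le_add_lineDeriv_of_isMinOn_convexOn_add hf hpmin (Set.mem_univ x)
    (Set.mem_univ y) (hp.hasLineDerivWithinAt _)
  rw [sub_dotProduct, smul_dotProduct, smul_eq_mul]
  linarith

theorem isStrongSubgradientAt (hf : IsStronglyConvex m f) (hg : IsStrongSubgradientAt 0 f g x) :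
    IsStrongSubgradientAt m f g x := by
  refine hf.isStrongSubgradientAt_of_forall_add_le_add (q := fun y => -g ⬝ᵥ y) (fun y => ?_)
    fun v => ?_
  · have hy := hg y
    rw [dotProduct_sub] at hy
    simp only [neg_dotProduct]
    linarith
  · simpa only [neg_dotProduct] using hasLineDerivAt_dotProduct (-g) x v

theorem isStrongSubgradientAt_of_forall_augmented_le (hf : IsStronglyConvex m f) {B : Matrix n n ℝ}
    (hB : B.IsSymm) {l z : n → ℝ}
    (hmin : ∀ y, f x + l ⬝ᵥ x + 1 / 2 * quadForm B (x - z) ≤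
      f y + l ⬝ᵥ y + 1 / 2 * quadForm B (y - z)) :
    IsStrongSubgradientAt m f (B *ᵥ (z - x) - l) x := by
  refine hf.isStrongSubgradientAt_of_forall_add_le_add
    (q := fun y => l ⬝ᵥ y + 1 / 2 * quadForm B (y - z))
    (fun y => by linarith [hmin y]) fun v => ?_
  have hquad := (hasLineDerivAt_quadForm_sub hB z x v).const_mul (1 / 2)
  refine ((hasLineDerivAt_dotProduct l x v).add hquad).congr_deriv ?_
  rw [← neg_sub x z, mulVec_neg, sub_dotProduct, neg_dotProduct]
  ring

end IsStronglyConvex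

end StrongSubgradient

section ConsensusAladin

variable {ι n : Type*} [Fintype ι] [Fintype n] [DecidableEq n] {m : ι → ℝ}
  {f : ι → (n → ℝ) → ℝ} {B : ι → Matrix n n ℝ} {zstar z zp : n → ℝ}
  {lamstar lam xp g lamp : ι → n → ℝ}

/-- The energy `L(z, λ) = ∑ᵢ (‖λᵢ - λᵢ*‖²_{Bᵢ⁻¹} + ‖z - z*‖²_{Bᵢ})` of a primal-dual pair
relative to a KKT point `(z*, λ*)`. -/
noncomputable def aladinEnergy (B : ι → Matrix n n ℝ) (zstar : n → ℝ) (lamstar : ι → n → ℝ)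
    (z : n → ℝ) (lam : ι → n → ℝ) : ℝ :=
  ∑ i, (quadForm (B i)⁻¹ (lam i - lamstar i) + quadForm (B i) (z - zstar))

/-- One Consensus ALADIN iteration with constant matrices `Bᵢ`, from `(z, λ)` to `(zp, lamp)`. The
relation also records the local solutions `xp` and the recovered gradients `g`, because the local
minimizers need not be unique for arbitrary `fᵢ`. -/
structure IsConsensusAladinStep (f : ι → (n → ℝ) → ℝ) (B : ι → Matrix n n ℝ) (z : n → ℝ)
    (lam xp g : ι → n → ℝ) (zp : n → ℝ) (lamp : ι → n → ℝ) : Prop where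
  local_min : ∀ i x, f i (xp i) + lam i ⬝ᵥ xp i + 1 / 2 * quadForm (B i) (xp i - z) ≤
    f i x + lam i ⬝ᵥ x + 1 / 2 * quadForm (B i) (x - z)
  gradient_eq : ∀ i, g i = B i *ᵥ (z - xp i) - lam i
  primal_eq : zp = (∑ i, B i)⁻¹ *ᵥ ∑ i, (B i *ᵥ xp i - g i)
  dual_eq : ∀ i, lamp i = B i *ᵥ (xp i - zp) - g i

namespace IsConsensusAladinStep

theorem sum_dual_eq_zero (h : IsConsensusAladinStep f B z lam xp g zp lamp)
    (hB : IsUnit (∑ i, B i)) : ∑ i, lamp i = 0 := by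
  have hprimal : (∑ i, B i) *ᵥ zp = ∑ i, (B i *ᵥ xp i - g i) := by
    rw [h.primal_eq, mulVec_mulVec, mul_nonsing_inv _ ((isUnit_iff_isUnit_det _).1 hB),
      one_mulVec]
  calc ∑ i, lamp i = ∑ i, ((B i *ᵥ xp i - g i) - B i *ᵥ zp) :=
        sum_congr rfl fun i _ => by rw [h.dual_eq, mulVec_sub, sub_right_comm]
    _ = 0 := by rw [sum_sub_distrib, ← hprimal, sum_mulVec, sub_self]

theorem aladinEnergy_sub_aladinEnergy (h : IsConsensusAladinStep f B z lam xp g zp lamp)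
    (hsymm : ∀ i, (B i).IsSymm) (hunit : ∀ i, IsUnit (B i)) (hsum : IsUnit (∑ i, B i))
    (hlamstar : ∑ i, lamstar i = 0) (hlam : ∑ i, lam i = 0) (zstar : n → ℝ) :
    aladinEnergy B zstar lamstar z lam - aladinEnergy B zstar lamstar zp lamp =
      4 * ∑ i, (g i + lamstar i) ⬝ᵥ (xp i - zstar) := by
  have hbefore : aladinEnergy B zstar lamstar z lam =
      ∑ i, quadForm (B i)⁻¹ (B i *ᵥ (xp i - zstar) + (g i + lamstar i)) := by
    have hdual : ∑ i, -(lam i - lamstar i) = 0 := by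
      rw [sum_neg_distrib, sum_sub_distrib, hlam, hlamstar, sub_zero, neg_zero]
    have hsplit := sum_quadForm_inv_mulVec_add hsymm hunit (z - zstar) hdual
    simp only [quadForm_neg] at hsplit
    refine hsplit.symm.trans (sum_congr rfl fun i _ => congrArg _ ?_)
    rw [h.gradient_eq]
    simp only [mulVec_sub]
    abel
  have hafter : aladinEnergy B zstar lamstar zp lamp =
      ∑ i, quadForm (B i)⁻¹ (B i *ᵥ (xp i - zstar) - (g i + lamstar i)) := by
    have hdual : ∑ i, (lamp i - lamstar i) = 0 := by
      rw [sum_sub_distrib, h.sum_dual_eq_zero hsum, hlamstar, sub_zero]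
    have hsplit := sum_quadForm_inv_mulVec_add hsymm hunit (zp - zstar) hdual
    refine hsplit.symm.trans (sum_congr rfl fun i _ => congrArg _ ?_)
    rw [h.dual_eq]
    simp only [mulVec_sub]
    abel
  rw [hbefore, hafter, ← sum_sub_distrib, mul_sum]
  exact sum_congr rfl fun i _ =>
    quadForm_inv_mulVec_add_sub_quadForm_inv_mulVec_sub (hsymm i) (hunit i) _ _

theorem mul_dotProduct_self_le (h : IsConsensusAladinStep f B z lam xp g zp lamp)
    (hf : ∀ i, IsStronglyConvex (m i) (f i)) (hsymm : ∀ i, (B i).IsSymm)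
    (hKKT : ∀ i, IsStrongSubgradientAt 0 (f i) (-lamstar i) zstar) (i : ι) :
    m i * ((xp i - zstar) ⬝ᵥ (xp i - zstar)) ≤ (g i + lamstar i) ⬝ᵥ (xp i - zstar) := by
  have hxp : IsStrongSubgradientAt (m i) (f i) (g i) (xp i) := by
    rw [h.gradient_eq]
    exact (hf i).isStrongSubgradientAt_of_forall_augmented_le (hsymm i) (h.local_min i)
  simpa only [sub_neg_eq_add] using
    hxp.strongly_monotone ((hf i).isStrongSubgradientAt (hKKT i))

end IsConsensusAladinStep

theorem stmt_2_general (hf : ∀ i, IsStronglyConvex (m i) (f i)) (hsymm : ∀ i, (B i).IsSymm)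
    (hunit : ∀ i, IsUnit (B i)) (hsum : IsUnit (∑ i, B i))
    (hKKT : ∀ i, IsStrongSubgradientAt 0 (f i) (-lamstar i) zstar)
    (hlamstar : ∑ i, lamstar i = 0) (hlam : ∑ i, lam i = 0)
    (hstep : IsConsensusAladinStep f B z lam xp g zp lamp) {δ : ℝ} (hδ : -1 < δ)
    (hδL : δ * aladinEnergy B zstar lamstar zp lamp ≤
      4 * ∑ i, m i * ((xp i - zstar) ⬝ᵥ (xp i - zstar))) :
    aladinEnergy B zstar lamstar zp lamp ≤ 1 / (1 + δ) * aladinEnergy B zstar lamstar z lam := by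
  have hdecrease :=
    hstep.aladinEnergy_sub_aladinEnergy hsymm hunit hsum hlamstar hlam zstar
  have hmono := sum_le_sum fun i (_ : i ∈ univ) => hstep.mul_dotProduct_self_le hf hsymm hKKT i
  rw [one_div_mul_eq_div, le_div_iff₀ (by linarith)]
  linarith

end ConsensusAladin

/-- One Consensus ALADIN iteration with constant matrices for the
consensus problem, with each `fᵢ` differentiable and `m`-strongly convex (`m > 0`),
`(z*, λ*)` a KKT point, and `Σᵢ λᵢ = 0`: if `δ > 0` satisfies
`δ · L(z⁺, λ⁺) ≤ 4m Σᵢ ‖xᵢ⁺ − z*‖²`, then `L(z⁺, λ⁺) ≤ (1/(1+δ)) · L(z, λ)`. -/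
theorem stmt_2 {n N : ℕ} (hN : 0 < N) (m : ℝ) (hm : 0 < m)
    (f : Fin N → (Fin n → ℝ) → ℝ)
    (gradf : Fin N → (Fin n → ℝ) → (Fin n → ℝ))
    (hdiff : ∀ i, Differentiable ℝ (f i))
    (hgrad : ∀ i x y, fderiv ℝ (f i) x y = gradf i x ⬝ᵥ y)
    -- m-strong convexity: f(y) ≥ f(x) + ∇f(x)ᵀ(y − x) + (m/2)‖y − x‖²
    (hsc : ∀ i x y, f i x + gradf i x ⬝ᵥ (y - x) + m / 2 * ((y - x) ⬝ᵥ (y - x)) ≤ f i y)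
    (B : Fin N → Matrix (Fin n) (Fin n) ℝ)
    (hB : ∀ i, (B i).PosDef)
    -- KKT point (z*, λ*)
    (zstar : Fin n → ℝ) (lamstar : Fin N → Fin n → ℝ)
    (hKKT1 : ∀ i, gradf i zstar + lamstar i = 0)
    (hKKT2 : ∑ i, lamstar i = 0)
    -- energy function
    (L : (Fin n → ℝ) → (Fin N → Fin n → ℝ) → ℝ)
    (hL : ∀ w μ, L w μ = ∑ i, ((μ i - lamstar i) ⬝ᵥ ((B i)⁻¹ *ᵥ (μ i - lamstar i))
        + (w - zstar) ⬝ᵥ ((B i) *ᵥ (w - zstar))))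
    -- current iterate (z, λ) with Σᵢ λᵢ = 0
    (z : Fin n → ℝ) (lam : Fin N → Fin n → ℝ)
    (hlam : ∑ i, lam i = 0)
    -- the iteration: xᵢ⁺ is the global minimizer of the local subproblem
    (xp : Fin N → Fin n → ℝ)
    (hxp : ∀ i x, f i (xp i) + lam i ⬝ᵥ xp i
          + (1 / 2 : ℝ) * ((xp i - z) ⬝ᵥ ((B i) *ᵥ (xp i - z)))
        ≤ f i x + lam i ⬝ᵥ x + (1 / 2 : ℝ) * ((x - z) ⬝ᵥ ((B i) *ᵥ (x - z))))
    -- gradient recovery, global update and dual update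
    (g : Fin N → Fin n → ℝ)
    (hg : ∀ i, g i = (B i) *ᵥ (z - xp i) - lam i)
    (zp : Fin n → ℝ)
    (hzp : zp = (∑ i, B i)⁻¹ *ᵥ (∑ i, ((B i) *ᵥ xp i - g i)))
    (lamp : Fin N → Fin n → ℝ)
    (hlamp : ∀ i, lamp i = (B i) *ᵥ (xp i - zp) - g i)
    -- the contraction parameter δ
    (δ : ℝ) (hδ : 0 < δ)
    (hδL : δ * L zp lamp ≤ 4 * m * ∑ i, ((xp i - zstar) ⬝ᵥ (xp i - zstar))) :
    L zp lamp ≤ (1 / (1 + δ)) * L z lam := by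
  obtain rfl : L = aladinEnergy B zstar lamstar := funext₂ hL
  have hsub : ∀ i x, IsStrongSubgradientAt m (f i) (gradf i x) x := hsc
  have hconv : ∀ i, IsStronglyConvex m (f i) := fun i =>
    isStronglyConvex_of_forall_exists_isStrongSubgradientAt fun x => ⟨_, hsub i x⟩
  have hKKT : ∀ i, IsStrongSubgradientAt 0 (f i) (-lamstar i) zstar := fun i =>
    eq_neg_of_add_eq_zero_left (hKKT1 i) ▸ (hsub i zstar).mono hm.le
  have hsum : IsUnit (∑ i, B i) :=
    (posDef_sum ⟨⟨0, hN⟩, mem_univ _⟩ fun i _ => hB i).isUnit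
  exact stmt_2_general hconv (fun i => isHermitian_iff_isSymm.1 (hB i).isHermitian)
    (fun i => (hB i).isUnit) hsum hKKT hKKT2 hlam ⟨hxp, hg, hzp, hlamp⟩ (by linarith)
    (by rwa [← mul_sum, ← mul_assoc])
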